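/- Let H be a complex Hilbert space, M a von Neumann algebra acting on H, and ξ₀ a cyclic and separating vector for M. For every a ∈ M with 0 ≤ a ≤ 1 there exists a projection e ∈ M such that e ξ₀ − a ξ₀ ∈ P♯, and for every projection f ∈ M with f ξ₀ − a ξ₀ ∈ P♯ one has f ξ₀ − e ξ₀ ∈ P♯; that is, e ξ₀ is the least projective vector dominating a ξ₀. -/

import Mathlib

open scoped InnerProductSpace
open Filter

variable {H : Type*} [NormedAddCommGroup H] [InnerProductSpace ℂ H] [CompleteSpace H]

/-- The positive cone `P♯`: the closure in `H` of `{a ξ₀ : a ∈ M, a positive}`. -/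
def sharpCone (M : VonNeumannAlgebra H) (ξ₀ : H) : Set H :=
  closure {ζ : H | ∃ a : H →L[ℂ] H, a ∈ M ∧ a.IsPositive ∧ a ξ₀ = ζ}

/-- `ξ₀` is a cyclic vector for `M`: the linear span of `{x ξ₀ : x ∈ M}` is dense in `H`. -/
def IsCyclicVector (M : VonNeumannAlgebra H) (ξ₀ : H) : Prop :=
  Dense ((Submodule.span ℂ ((fun x : H →L[ℂ] H => x ξ₀) '' (M : Set (H →L[ℂ] H)))) : Set H)

/-- `ξ₀` is a separating vector for `M`: `x ∈ M` and `x ξ₀ = 0` imply `x = 0`. -/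
def IsSeparatingVector (M : VonNeumannAlgebra H) (ξ₀ : H) : Prop :=
  ∀ x : H →L[ℂ] H, x ∈ M → x ξ₀ = 0 → x = 0

/-!
For `0 ≤ a ≤ 1`, the least projection above `a` is the projection `e` onto the closure of the range
of `a`: for a projection `f`, the inequality `a ≤ f` says that `f` fixes the range of `a`, that is,
`e ≤ f`. Moreover, the order of the vectors `x ξ₀` is the order of the operators `x ∈ M`. Indeed, a
separating vector for `M` is cyclic for the commutant `M'`, and for `x ∈ M` and `y ∈ M'` one has
`⟪x (y ξ₀), y ξ₀⟫ = ⟪x ξ₀, y⋆ y ξ₀⟫`. Since `P♯` pairs nonnegatively with the vectors `y⋆ y ξ₀`,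
`x ξ₀ ∈ P♯` forces `x ≥ 0`.
-/

section RangeProjection

variable {𝕜 E F : Type*} [RCLike 𝕜] [NormedAddCommGroup E] [NormedSpace 𝕜 E]
  [NormedAddCommGroup F] [InnerProductSpace 𝕜 F] [CompleteSpace F]

/-- The range projection of `T`: the orthogonal projection onto the closure of the range of `T`,
as an operator on the codomain. -/
noncomputable def rangeProjection (T : E →L[𝕜] F) : F →L[𝕜] F :=
  T.range.topologicalClosure.starProjection

theorem isStarProjection_rangeProjection (T : E →L[𝕜] F) : IsStarProjection (rangeProjection T) :=
  isStarProjection_starProjection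

theorem rangeProjection_le_iff_comp_eq (T : E →L[𝕜] F) {p : F →L[𝕜] F} (hp : IsStarProjection p) :
    rangeProjection T ≤ p ↔ p ∘L T = T := by
  obtain ⟨K, _, rfl⟩ := isStarProjection_iff_eq_starProjection.1 hp
  have hK : IsClosed (K : Set F) := K.orthogonal_orthogonal ▸ Kᗮ.isClosed_orthogonal
  rw [rangeProjection, Submodule.starProjection_le_starProjection_iff]
  calc T.range.topologicalClosure ≤ K
    _ ↔ T.range ≤ K := ⟨T.range.le_topologicalClosure.trans,
          fun h ↦ T.range.topologicalClosure_minimal h hK⟩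
    _ ↔ K.starProjection ∘L T = T := by
          simp [SetLike.le_def, ContinuousLinearMap.ext_iff, Submodule.starProjection_eq_self_iff]

end RangeProjection

theorem le_isStarProjection_iff_mul_eq_right {A : Type*} [CStarAlgebra A] [PartialOrder A]
    [StarOrderedRing A] {a p : A} (ha₀ : 0 ≤ a) (ha₁ : a ≤ 1) (hp : IsStarProjection p) :
    a ≤ p ↔ p * a = a := by
  refine ⟨fun hap ↦ (hp.mul_right_and_mul_left_of_nonneg_of_le ha₀ hap).2, fun hpa ↦ ?_⟩
  have hap : a * p = a := by
    simpa [ha₀.star_eq, hp.isSelfAdjoint.star_eq] using congr(star $hpa)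
  calc a = p * a * p := by rw [hpa, hap]
    _ ≤ p * 1 * p := hp.isSelfAdjoint.conjugate_le_conjugate ha₁
    _ = p := by rw [mul_one, hp.isIdempotentElem.eq]

theorem rangeProjection_le_iff_le {a p : H →L[ℂ] H} (ha₀ : 0 ≤ a) (ha₁ : a ≤ 1)
    (hp : IsStarProjection p) : rangeProjection a ≤ p ↔ a ≤ p :=
  (rangeProjection_le_iff_comp_eq a hp).trans (le_isStarProjection_iff_mul_eq_right ha₀ ha₁ hp).symm

theorem inner_apply_eq_inner_star_mul_self_of_commute {𝕜 E : Type*} [RCLike 𝕜]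
    [NormedAddCommGroup E] [InnerProductSpace 𝕜 E] [CompleteSpace E] {x y : E →L[𝕜] E}
    (hxy : Commute x y) (v w : E) :
    ⟪x (y v), y w⟫_𝕜 = ⟪x v, (star y * y) w⟫_𝕜 := by
  have hxyv : x (y v) = y (x v) := congr($hxy.eq v)
  rw [hxyv, ContinuousLinearMap.star_eq_adjoint, mul_apply_eq_comp,
    ContinuousLinearMap.adjoint_inner_right]

section SeparatingVector

variable {M : VonNeumannAlgebra H} {ξ : H}

theorem starProjection_topologicalClosure_mem_of_forall_mem_invtSubmodule {U : Submodule ℂ H}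
    (hU : ∀ y ∈ M.commutant, U ∈ Module.End.invtSubmodule (y : H →ₗ[ℂ] H)) :
    U.topologicalClosure.starProjection ∈ M := by
  refine (VonNeumannAlgebra.IsStarProjection.mem_iff isStarProjection_starProjection M).2
    fun y hy ↦ ?_
  rw [Submodule.range_starProjection]
  exact Submodule.topologicalClosure_mem_invtSubmodule (f := y) (hU y hy)

theorem rangeProjection_mem {a : H →L[ℂ] H} (ha : a ∈ M) : rangeProjection a ∈ M := by
  refine starProjection_topologicalClosure_mem_of_forall_mem_invtSubmodule fun y hy ↦ ?_
  rintro _ ⟨v, rfl⟩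
  exact ⟨y v, congr($(VonNeumannAlgebra.mem_commutant_iff.1 hy a ha) v)⟩

theorem span_image_apply_eq_map_toSubmodule (M : VonNeumannAlgebra H) (ξ : H) :
    Submodule.span ℂ ((fun x : H →L[ℂ] H ↦ x ξ) '' (M : Set (H →L[ℂ] H))) =
      (Subalgebra.toSubmodule M.toSubalgebra).map
        (ContinuousLinearMap.apply ℂ H ξ : (H →L[ℂ] H) →ₗ[ℂ] H) :=
  (Submodule.map_span (ContinuousLinearMap.apply ℂ H ξ : (H →L[ℂ] H) →ₗ[ℂ] H) _).symm.trans <|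
    congr(Submodule.map _ $(Submodule.span_eq (Subalgebra.toSubmodule M.toSubalgebra)))

theorem IsCyclicVector.dense_image (h : IsCyclicVector M ξ) :
    Dense ((fun x : H →L[ℂ] H ↦ x ξ) '' (M : Set (H →L[ℂ] H))) := by
  rwa [IsCyclicVector, span_image_apply_eq_map_toSubmodule] at h

theorem IsSeparatingVector.isCyclicVector_commutant (hξ : IsSeparatingVector M ξ) :
    IsCyclicVector M.commutant ξ := by
  rw [IsCyclicVector, span_image_apply_eq_map_toSubmodule]
  set U := (Subalgebra.toSubmodule M.commutant.toSubalgebra).map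
    (ContinuousLinearMap.apply ℂ H ξ : (H →L[ℂ] H) →ₗ[ℂ] H)
  have hUM : U.topologicalClosure.starProjection ∈ M := by
    refine starProjection_topologicalClosure_mem_of_forall_mem_invtSubmodule fun y hy ↦ ?_
    rintro _ ⟨z, hz, rfl⟩
    exact ⟨y * z, M.commutant.mul_mem' hy hz, rfl⟩
  have hξU : ξ ∈ U.topologicalClosure :=
    U.le_topologicalClosure ⟨1, one_mem M.commutant, rfl⟩
  have hU : 1 - U.topologicalClosure.starProjection = 0 :=
    hξ _ (sub_mem (one_mem M) hUM) (by simp [Submodule.starProjection_eq_self_iff.2 hξU])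
  rw [Submodule.dense_iff_topologicalClosure_eq_top, eq_top_iff]
  intro v _
  have hv : U.topologicalClosure.starProjection v = v := congr($((sub_eq_zero.1 hU).symm) v)
  exact Submodule.starProjection_eq_self_iff.1 hv

open scoped ComplexOrder in
theorem inner_star_mul_self_apply_nonneg_of_mem_sharpCone {ζ : H} (hζ : ζ ∈ sharpCone M ξ)
    {y : H →L[ℂ] H} (hy : y ∈ M.commutant) :
    0 ≤ ⟪ζ, (star y * y) ξ⟫_ℂ := by
  have hclosed : IsClosed {η : H | 0 ≤ ⟪η, (star y * y) ξ⟫_ℂ} :=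
    isClosed_le continuous_const (by fun_prop)
  refine closure_minimal ?_ hclosed hζ
  rintro _ ⟨b, hbM, hb, rfl⟩
  rw [Set.mem_ofPred_eq,
    ← inner_apply_eq_inner_star_mul_self_of_commute
      (VonNeumannAlgebra.mem_commutant_iff.1 hy b hbM)]
  exact hb.inner_nonneg_left (y ξ)

open scoped ComplexOrder in
theorem IsSeparatingVector.apply_mem_sharpCone_iff (hξ : IsSeparatingVector M ξ)
    {x : H →L[ℂ] H} (hx : x ∈ M) : x ξ ∈ sharpCone M ξ ↔ 0 ≤ x := by
  rw [ContinuousLinearMap.nonneg_iff_isPositive]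
  refine ⟨fun hxξ ↦ ?_, fun hx₀ ↦ subset_closure ⟨x, hx, hx₀, rfl⟩⟩
  have hinner (v : H) : 0 ≤ ⟪x v, v⟫_ℂ := by
    refine hξ.isCyclicVector_commutant.dense_image.induction (P := fun v ↦ 0 ≤ ⟪x v, v⟫_ℂ) ?_
      (isClosed_le continuous_const (by fun_prop)) v
    rintro _ ⟨y, hy, rfl⟩
    rw [inner_apply_eq_inner_star_mul_self_of_commute
      (VonNeumannAlgebra.mem_commutant_iff.1 hy x hx)]
    exact inner_star_mul_self_apply_nonneg_of_mem_sharpCone hxξ hy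
  exact (ContinuousLinearMap.isPositive_iff_complex x).2 fun v ↦
    ⟨(Complex.eq_re_of_ofReal_le (hinner v)).symm, (Complex.nonneg_iff.1 (hinner v)).1⟩

theorem IsSeparatingVector.sub_apply_mem_sharpCone_iff (hξ : IsSeparatingVector M ξ)
    {x y : H →L[ℂ] H} (hx : x ∈ M) (hy : y ∈ M) :
    y ξ - x ξ ∈ sharpCone M ξ ↔ x ≤ y := by
  rw [← sub_apply, hξ.apply_mem_sharpCone_iff (sub_mem hy hx), sub_nonneg]

end SeparatingVector

theorem stmt17_general (M : VonNeumannAlgebra H) (ξ₀ : H) (hsep : IsSeparatingVector M ξ₀)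
    (a : H →L[ℂ] H) (haM : a ∈ M) (ha_pos : a.IsPositive) (ha_le : (1 - a).IsPositive) :
    ∃ e : H →L[ℂ] H, e ∈ M ∧ IsSelfAdjoint e ∧ e * e = e ∧
      e ξ₀ - a ξ₀ ∈ sharpCone M ξ₀ ∧
      ∀ f : H →L[ℂ] H, f ∈ M → IsSelfAdjoint f → f * f = f →
        f ξ₀ - a ξ₀ ∈ sharpCone M ξ₀ → f ξ₀ - e ξ₀ ∈ sharpCone M ξ₀ := by
  have ha₀ : 0 ≤ a := (ContinuousLinearMap.nonneg_iff_isPositive a).2 ha_pos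
  have ha₁ : a ≤ 1 := ha_le
  have he := isStarProjection_rangeProjection a
  have heM := rangeProjection_mem haM
  refine ⟨rangeProjection a, heM, he.isSelfAdjoint, he.isIdempotentElem, ?_,
    fun f hfM hf_sa hf_idem haf ↦ ?_⟩
  · rw [hsep.sub_apply_mem_sharpCone_iff haM heM, ← rangeProjection_le_iff_le ha₀ ha₁ he]
  · rw [hsep.sub_apply_mem_sharpCone_iff heM hfM,
      rangeProjection_le_iff_le ha₀ ha₁ ⟨hf_idem, hf_sa⟩]
    exact (hsep.sub_apply_mem_sharpCone_iff haM hfM).1 haf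

/-- Every `a ∈ M` with `0 ≤ a ≤ 1` has a least projective vector above `a ξ₀`:
a projection `e ∈ M` with `a ξ₀ ≤ e ξ₀`, least among all projections `f ∈ M` with
`a ξ₀ ≤ f ξ₀` (where `ζ ≤ η` means `η - ζ ∈ P♯`). -/
theorem stmt17 (M : VonNeumannAlgebra H) (ξ₀ : H)
    (hcyc : IsCyclicVector M ξ₀) (hsep : IsSeparatingVector M ξ₀)
    (a : H →L[ℂ] H) (haM : a ∈ M) (ha_pos : a.IsPositive) (ha_le : (1 - a).IsPositive) :
    ∃ e : H →L[ℂ] H, e ∈ M ∧ IsSelfAdjoint e ∧ e * e = e ∧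
      e ξ₀ - a ξ₀ ∈ sharpCone M ξ₀ ∧
      ∀ f : H →L[ℂ] H, f ∈ M → IsSelfAdjoint f → f * f = f →
        f ξ₀ - a ξ₀ ∈ sharpCone M ξ₀ → f ξ₀ - e ξ₀ ∈ sharpCone M ξ₀ :=
  stmt17_general M ξ₀ hsep a haM ha_pos ha_le
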